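/- arXiv:1112.5373 — 2 statements merged into one kernel-verified Lean document; each statement's English description precedes it below -/
import Mathlib

section
/- If T ≥ 0 is an unbiased shift of B such that P₀{B_T = 0} = 1 and P₀{T > 0} > 0, then E₀[T] = ∞. -/
open MeasureTheory ProbabilityTheory

/-- A two-sided standard Brownian motion: a.s. continuous paths, `B₀ = 0`, independent
increments, and `B_t − B_s` centered Gaussian with variance `t − s` for `s < t`. -/
structure IsTwoSidedBM {Ω : Type*} [MeasurableSpace Ω] (P : Measure Ω) (B : ℝ → Ω → ℝ) :
    Prop where
  aemeas : ∀ t : ℝ, AEMeasurable (B t) P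
  cont : ∀ᵐ ω ∂P, Continuous fun t => B t ω
  zero : ∀ᵐ ω ∂P, B 0 ω = 0
  indepIncr : ∀ (n : ℕ) (t : Fin (n + 1) → ℝ), Monotone t →
    iIndepFun
      (fun (i : Fin n) ω => B (t i.succ) ω - B (t i.castSucc) ω) P
  gaussIncr : ∀ s t : ℝ, s < t →
    Measure.map (fun ω => B t ω - B s ω) P = gaussianReal 0 (Real.toNNReal (t - s))

/-- A random time: a measurable function of the path of `B`. -/
def IsRandomTime {Ω : Type*} [MeasurableSpace Ω] (B : ℝ → Ω → ℝ) (T : Ω → ℝ) : Prop :=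
  @Measurable Ω ℝ (MeasurableSpace.comap (fun ω (t : ℝ) => B t ω) inferInstance) _ T

/-- An unbiased shift: a random time `T` such that `(B_{T+t} − B_T)_{t∈ℝ}` is a two-sided
Brownian motion independent of `B_T`. -/
def IsUnbiasedShift {Ω : Type*} [MeasurableSpace Ω] (P : Measure Ω) (B : ℝ → Ω → ℝ)
    (T : Ω → ℝ) : Prop :=
  IsRandomTime B T ∧
  IsTwoSidedBM P (fun t ω => B (T ω + t) ω - B (T ω) ω) ∧
  IndepFun (fun ω (t : ℝ) => B (T ω + t) ω - B (T ω) ω) (fun ω => B (T ω) ω) P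

/-- `T` embeds the distribution `ν`: `B_T` has law `ν`. -/
def Embeds {Ω : Type*} [MeasurableSpace Ω] (P : Measure Ω) (B : ℝ → Ω → ℝ) (T : Ω → ℝ)
    (ν : Measure ℝ) : Prop :=
  Measure.map (fun ω => B (T ω) ω) P = ν

/-- A stopping time with respect to the filtration `(σ(B_s : s ≤ t))_{t ≥ 0}`. -/
def IsBMStoppingTime {Ω : Type*} [MeasurableSpace Ω] (B : ℝ → Ω → ℝ) (T : Ω → ℝ) : Prop :=
  ∀ t : ℝ, 0 ≤ t →
    MeasurableSet[⨆ s ∈ Set.Iic t, MeasurableSpace.comap (B s) inferInstance] {ω | T ω ≤ t}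

open scoped ENNReal NNReal
open Filter Topology

lemma gauss_tendsto_aux (K : ℝ) (s : ℝ) (hs : 0 < s) :
    Tendsto (fun n : ℕ => gaussianReal 0 (Real.toNNReal (s + n)) (Set.Icc (-K) K)) atTop (𝓝 0) := by
  have hb : ∀ n : ℕ, gaussianReal 0 (Real.toNNReal (s + n)) (Set.Icc (-K) K)
      ≤ ENNReal.ofReal ((√(2 * Real.pi * (s + n)))⁻¹) * volume (Set.Icc (-K) K) := by
    intro n
    have hpos : 0 < s + n := by positivity
    have hne : Real.toNNReal (s + n) ≠ 0 := by simpa using hpos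
    rw [gaussianReal_apply _ hne]
    calc _ ≤ ∫⁻ x in Set.Icc (-K) K, ENNReal.ofReal ((√(2 * Real.pi * (s + n)))⁻¹) := by
            apply lintegral_mono
            intro x
            simp only [gaussianPDF, gaussianPDFReal]
            apply ENNReal.ofReal_le_ofReal
            rw [Real.coe_toNNReal _ hpos.le]
            apply mul_le_of_le_one_right (by positivity)
            rw [Real.exp_le_one_iff]
            have : 0 ≤ (x - 0) ^ 2 / (2 * (s + n)) := by positivity
            rw [neg_div]; linarith
      _ = _ := by simp
  refine tendsto_of_tendsto_of_tendsto_of_le_of_le tendsto_const_nhds ?_ (fun _ => zero_le) hb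
  have h1 : Tendsto (fun n : ℕ => (√(2 * Real.pi * (s + n)))⁻¹) atTop (𝓝 0) := by
    apply Tendsto.inv_tendsto_atTop
    apply Real.tendsto_sqrt_atTop.comp
    apply Tendsto.const_mul_atTop (by positivity)
    exact tendsto_atTop_add_const_left _ _ tendsto_natCast_atTop_atTop
  have h2 := ENNReal.tendsto_ofReal h1
  have h3 := ENNReal.Tendsto.mul_const (b := volume (Set.Icc (-K) K)) h2
    (Or.inr (by simp))
  simpa using h3

lemma core_aux {Ω : Type*} [MeasurableSpace Ω]
    (P : Measure Ω) [IsProbabilityMeasure P]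
    (X : ℝ → Ω → ℝ) (hX : Measurable (Function.uncurry X))
    (τ : Ω → ℝ) (hτ : Measurable τ) (hτ0 : ∀ ω, 0 ≤ τ ω) (K : ℝ)
    (h1 : ∀ s, 0 < s → P {ω | X s ω ∈ Set.Icc (-K) K}
      = gaussianReal 0 (Real.toNNReal s) (Set.Icc (-K) K))
    (h2 : ∀ s, 0 < s → P {ω | X (τ ω + s) ω ∈ Set.Icc (-K) K}
      = gaussianReal 0 (Real.toNNReal s) (Set.Icc (-K) K))
    (hfin : ∫⁻ ω, ENNReal.ofReal (τ ω) ∂P ≠ ⊤) :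
    ∫⁻ ω, (∫⁻ s in Set.Ioc 0 (τ ω), (Set.Icc (-K) K).indicator 1 (X s ω)) ∂P = 0 := by
  set f : ℝ → ℝ≥0∞ := (Set.Icc (-K) K).indicator 1 with hf
  have hfm : Measurable f := measurable_one.indicator measurableSet_Icc
  have hf1 : ∀ x, f x ≤ 1 := fun x => Set.indicator_le_self' (by simp) x
  have hfX : Measurable (fun p : ℝ × Ω => f (X p.1 p.2)) := hfm.comp hX
  have hgs : ∀ (Y : Ω → ℝ), Measurable Y → ∫⁻ ω, f (Y ω) ∂P = P {ω | Y ω ∈ Set.Icc (-K) K} := by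
    intro Y hY
    have : (fun ω => f (Y ω)) = (Y ⁻¹' Set.Icc (-K) K).indicator 1 := by
      ext ω; rfl
    rw [this, lintegral_indicator_one (hY measurableSet_Icc)]; rfl
  have hXs : ∀ s, Measurable (X s) := fun s => hX.comp (measurable_const.prodMk measurable_id)
  have hXts : ∀ s, Measurable (fun ω => X (τ ω + s) ω) := fun s =>
    hX.comp ((hτ.add_const s).prodMk measurable_id)
  -- shifting integrals
  have shift : ∀ (a b u : ℝ) (g : ℝ → ℝ≥0∞),
      ∫⁻ s in Set.Ioc (a + u) (b + u), g s = ∫⁻ s in Set.Ioc a b, g (s + u) := by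
    intro a b u g
    have := (measurePreserving_add_right (volume : Measure ℝ) u).setLIntegral_comp_preimage_emb
      (measurableEmbedding_addRight u) g (Set.Ioc (a + u) (b + u))
    rw [← this]
    simp
  have meas_int : ∀ (a b : Ω → ℝ), Measurable a → Measurable b → ∀ h : Ω → ℝ,
      Measurable h → Measurable (fun ω => ∫⁻ s in Set.Ioc (a ω) (b ω), f (X (h ω + s) ω)) := by
    intro a b ha hb h hh
    have : (fun ω => ∫⁻ s in Set.Ioc (a ω) (b ω), f (X (h ω + s) ω)) =
        fun ω => ∫⁻ s, (Set.indicator {p : Ω × ℝ | a p.1 < p.2 ∧ p.2 ≤ b p.1}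
          (fun p => f (X (h p.1 + p.2) p.1))) (ω, s) := by
      ext ω
      rw [← lintegral_indicator measurableSet_Ioc]
      rfl
    rw [this]
    apply Measurable.lintegral_prod_right'
    apply Measurable.indicator
    · exact hfX.comp (((hh.comp measurable_fst).add measurable_snd).prodMk measurable_fst)
    · exact (measurableSet_lt (ha.comp measurable_fst) measurable_snd).inter
        (measurableSet_le measurable_snd (hb.comp measurable_fst))
  have inv : ∀ u : ℝ, 0 < u → ∫⁻ ω, (∫⁻ s in Set.Ioc 0 (τ ω), f (X s ω)) ∂P =
      ∫⁻ ω, (∫⁻ s in Set.Ioc 0 (τ ω), f (X (s + u) ω)) ∂P := by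
    intro u hu
    have split : ∀ ω, (∫⁻ s in Set.Ioc 0 (τ ω), f (X s ω))
          + (∫⁻ s in Set.Ioc 0 u, f (X (τ ω + s) ω)) =
        (∫⁻ s in Set.Ioc 0 (τ ω), f (X (s + u) ω)) + ∫⁻ s in Set.Ioc 0 u, f (X s ω) := by
      intro ω
      have e1 := shift 0 u (τ ω) (fun s => f (X s ω))
      have e2 := shift 0 (τ ω) u (fun s => f (X s ω))
      rw [zero_add] at e1 e2
      simp only [add_comm _ (τ ω)] at e1
      rw [← e1, ← e2, ← lintegral_union measurableSet_Ioc (by simp),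
        add_comm (∫⁻ s in Set.Ioc u (τ ω + u), f (X s ω)), ← lintegral_union measurableSet_Ioc (by simp),
        Set.Ioc_union_Ioc_eq_Ioc (hτ0 ω) (by linarith),
        Set.Ioc_union_Ioc_eq_Ioc hu.le (by linarith [hτ0 ω])]
    have hI := lintegral_congr (μ := P) split
    have m1 : Measurable (fun ω => ∫⁻ s in Set.Ioc 0 u, f (X (τ ω + s) ω)) :=
      meas_int _ _ measurable_const measurable_const τ hτ
    have m2 : Measurable (fun ω => ∫⁻ s in Set.Ioc 0 u, f (X s ω)) := by
      simpa using meas_int (fun _ => 0) (fun _ => u) measurable_const measurable_const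
        (fun _ => 0) measurable_const
    rw [lintegral_add_right _ m1, lintegral_add_right _ m2] at hI
    have s1 : ∫⁻ ω, (∫⁻ s in Set.Ioc 0 u, f (X (τ ω + s) ω)) ∂P =
        ∫⁻ s in Set.Ioc 0 u, gaussianReal 0 (Real.toNNReal s) (Set.Icc (-K) K) := by
      rw [lintegral_lintegral_swap]
      · apply setLIntegral_congr_fun measurableSet_Ioc
        intro s hs
        simp only
        rw [hgs _ (hXts s), h2 s hs.1]
      · exact (hfX.comp (((hτ.comp measurable_fst).add measurable_snd).prodMk
          measurable_fst)).aemeasurable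
    have s2 : ∫⁻ ω, (∫⁻ s in Set.Ioc 0 u, f (X s ω)) ∂P =
        ∫⁻ s in Set.Ioc 0 u, gaussianReal 0 (Real.toNNReal s) (Set.Icc (-K) K) := by
      rw [lintegral_lintegral_swap]
      · apply setLIntegral_congr_fun measurableSet_Ioc
        intro s hs
        simp only
        rw [hgs _ (hXs s), h1 s hs.1]
      · exact (hfX.comp (measurable_snd.prodMk measurable_fst)).aemeasurable
    rw [s1, s2] at hI
    refine (ENNReal.add_left_inj ?_).1 hI
    refine ne_top_of_le_ne_top (b := ∫⁻ s in Set.Ioc 0 u, (1 : ℝ≥0∞)) (by simp) ?_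
    exact lintegral_mono (fun s => prob_le_one)
  -- Fubini
  have mset : MeasurableSet {p : Ω × ℝ | 0 < p.2 ∧ p.2 ≤ τ p.1} :=
    (measurableSet_lt measurable_const measurable_snd).inter
        (measurableSet_le measurable_snd (hτ.comp measurable_fst))
  have fub : ∀ g : Ω → ℝ → ℝ≥0∞, Measurable (Function.uncurry g) →
      ∫⁻ ω, (∫⁻ s in Set.Ioc 0 (τ ω), g ω s) ∂P =
        ∫⁻ s, ∫⁻ ω, (Set.indicator {p : Ω × ℝ | 0 < p.2 ∧ p.2 ≤ τ p.1}
          (Function.uncurry g)) (ω, s) ∂P := by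
    intro g hg
    rw [← lintegral_lintegral_swap]
    · apply lintegral_congr
      intro ω
      rw [← lintegral_indicator measurableSet_Ioc]
      rfl
    · exact (hg.indicator mset).aemeasurable
  have hG : ∀ n : ℕ, Measurable (Function.uncurry fun (ω : Ω) (s : ℝ) => f (X (s + n) ω)) :=
    fun n => hfX.comp ((measurable_snd.add_const _).prodMk measurable_fst)
  have lim : Tendsto (fun n : ℕ => ∫⁻ ω, (∫⁻ s in Set.Ioc 0 (τ ω), f (X (s + n) ω)) ∂P) atTop
      (𝓝 0) := by
    have : ∀ n : ℕ, _ := fun n => fub (fun ω s => f (X (s + n) ω)) (hG n)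
    simp_rw [this]
    rw [show (0 : ℝ≥0∞) = ∫⁻ s : ℝ, 0 by simp]
    refine tendsto_lintegral_of_dominated_convergence
      (fun s => ∫⁻ ω, (Set.indicator {p : Ω × ℝ | 0 < p.2 ∧ p.2 ≤ τ p.1}
          (Function.uncurry fun _ _ => 1)) (ω, s) ∂P) ?_ ?_ ?_ ?_
    · intro n
      exact Measurable.lintegral_prod_left' ((hG n).indicator mset)
    · intro n
      refine Eventually.of_forall fun s => lintegral_mono fun ω => ?_
      apply Set.indicator_le_indicator
      exact hf1 _
    · rw [← fub (fun _ _ => 1) measurable_const]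
      simpa using hfin
    · refine Eventually.of_forall fun s => ?_
      rcases le_or_gt s 0 with hs | hs
      · have : ∀ (n : ℕ) ω, (Set.indicator {p : Ω × ℝ | 0 < p.2 ∧ p.2 ≤ τ p.1}
          (Function.uncurry fun (ω : Ω) (s : ℝ) => f (X (s + n) ω))) (ω, s) = 0 := by
          intro n ω
          apply Set.indicator_of_notMem
          simp [hs]
        simp [this]
      · refine tendsto_of_tendsto_of_tendsto_of_le_of_le tendsto_const_nhds
          (gauss_tendsto_aux K s hs) (fun _ => zero_le) ?_
        intro n
        simp only
        rw [← h1 _ (by positivity), ← hgs _ (hXs _)]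
        refine lintegral_mono fun ω => ?_
        exact Set.indicator_le_self' (by simp) (ω, s)
  refine tendsto_nhds_unique (tendsto_const_nhds.congr' ?_) lim
  filter_upwards [eventually_gt_atTop 0] with n hn
  exact inv n (by exact_mod_cast hn)

/-- if `T ≥ 0` is an unbiased shift with `P₀{B_T = 0} = 1` and
`P₀{T > 0} > 0`, then `E₀[T] = ∞`. -/
theorem nonneg_unbiased_shift_first_moment_infinite {Ω : Type*} [MeasurableSpace Ω]
    (P : Measure Ω) [IsProbabilityMeasure P]
    (B : ℝ → Ω → ℝ) (hB : IsTwoSidedBM P B)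
    (T : Ω → ℝ) (hT0 : ∀ ω, 0 ≤ T ω) (hT : IsUnbiasedShift P B T)
    (hBT : P {ω | B (T ω) ω = 0} = 1) (hTpos : 0 < P {ω | 0 < T ω}) :
    ∫⁻ ω, ENNReal.ofReal (T ω) ∂P = ⊤ := by
  by_contra hfin
  have hTm : AEMeasurable T P := by
    have hle : MeasurableSpace.comap (fun ω (t : ℝ) => B t ω) inferInstance ≤
        (inferInstance : MeasurableSpace (NullMeasurableSpace Ω P)) := by
      refine measurable_iff_comap_le.1 ?_
      exact @measurable_pi_lambda _ _ _ (inferInstance : MeasurableSpace (NullMeasurableSpace Ω P))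
        _ _ fun t => (hB.aemeas t).nullMeasurable
    have : NullMeasurable T P := fun s hs => hle _ (hT.1 hs)
    exact this.aemeasurable
  -- a measurable good set
  have hgood : ∀ᵐ ω ∂P, (Continuous fun t => B t ω) ∧ T ω = hTm.mk T ω ∧
      ∀ q : ℚ, B q ω = (hB.aemeas q).mk (B q) ω := by
    filter_upwards [hB.cont, hTm.ae_eq_mk, ae_all_iff.2 fun q : ℚ => (hB.aemeas q).ae_eq_mk]
      with ω a b c using ⟨a, b, c⟩
  obtain ⟨G, hGsub, hGm, hGP⟩ : ∃ G : Set Ω, G ⊆ {ω | (Continuous fun t => B t ω) ∧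
      T ω = hTm.mk T ω ∧ ∀ q : ℚ, B q ω = (hB.aemeas q).mk (B q) ω} ∧ MeasurableSet G ∧
      G ∈ ae P := by
    obtain ⟨N, hN1, hN2, hN3⟩ := exists_measurable_superset_of_null (ae_iff.1 hgood)
    refine ⟨Nᶜ, ?_, hN2.compl, ?_⟩
    · intro ω hω
      by_contra h
      exact hω (hN1 h)
    · rw [mem_ae_iff, compl_compl]; exact hN3
  classical
  set X : ℝ → Ω → ℝ := fun t => G.indicator (B t) with hXdef
  set τ : Ω → ℝ := G.indicator T with hτdef
  have hτ : Measurable τ := by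
    have : τ = G.indicator (hTm.mk T) := by
      apply Set.indicator_congr
      intro ω hω; exact (hGsub hω).2.1
    rw [this]; exact hTm.measurable_mk.indicator hGm
  have hτ0 : ∀ ω, 0 ≤ τ ω := Set.indicator_nonneg fun ω _ => hT0 ω
  have hXc : ∀ ω, Continuous fun t => X t ω := by
    intro ω
    by_cases h : ω ∈ G
    · simpa [hXdef, h] using (hGsub h).1
    · simpa [hXdef, h] using continuous_const
  have hXq : ∀ q : ℚ, Measurable (X q) := by
    intro q
    have : X q = G.indicator ((hB.aemeas q).mk (B q)) := by
      apply Set.indicator_congr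
      intro ω hω; exact (hGsub hω).2.2 q
    rw [this]; exact (hB.aemeas q).measurable_mk.indicator hGm
  have hXt : ∀ t, Measurable (X t) := by
    intro t
    obtain ⟨v, hv, hvt⟩ := mem_closure_iff_seq_limit.1 (Rat.denseRange_cast (𝕜 := ℝ) t)
    choose u huv using hv
    have hu : Tendsto (fun n => ((u n : ℚ) : ℝ)) atTop (𝓝 t) := by simpa [huv] using hvt
    refine measurable_of_tendsto_metrizable (fun n => hXq (u n)) ?_
    rw [tendsto_pi_nhds]
    intro ω
    exact ((hXc ω).tendsto t).comp hu
  have hX : Measurable (Function.uncurry X) :=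
    measurable_uncurry_of_continuous_of_measurable hXc hXt
  have hGae : ∀ᵐ ω ∂P, ω ∈ G := hGP
  have hXB : ∀ᵐ ω ∂P, (∀ t, X t ω = B t ω) ∧ τ ω = T ω := by
    filter_upwards [hGae] with ω h
    simp [hXdef, hτdef, h]
  have hXτ : Measurable (fun ω => X (τ ω) ω) := hX.comp (hτ.prodMk measurable_id)
  have hBT' : ∀ᵐ ω ∂P, X (τ ω) ω = 0 := by
    have hm : MeasurableSet {ω | X (τ ω) ω = 0} := hXτ (measurableSet_singleton 0)
    have he : P {ω | X (τ ω) ω = 0} = 1 := by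
      rw [← hBT]
      apply measure_congr
      filter_upwards [hXB] with ω h
      apply propext
      change X (τ ω) ω = 0 ↔ B (T ω) ω = 0
      rw [h.1, h.2]
    exact (prob_compl_eq_zero_iff hm).2 he
  have hfin' : ∫⁻ ω, ENNReal.ofReal (τ ω) ∂P ≠ ⊤ := by
    have : ∫⁻ ω, ENNReal.ofReal (τ ω) ∂P = ∫⁻ ω, ENNReal.ofReal (T ω) ∂P := by
      apply lintegral_congr_ae
      filter_upwards [hXB] with ω h
      rw [h.2]
    rw [this]; exact hfin
  have key : ∀ K : ℕ, ∫⁻ ω, (∫⁻ s in Set.Ioc 0 (τ ω),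
      (Set.Icc (-(K : ℝ)) K).indicator 1 (X s ω)) ∂P = 0 := by
    intro K
    apply core_aux P X hX τ hτ hτ0 K _ _ hfin'
    · intro s hs
      have := hB.gaussIncr 0 s hs
      rw [sub_zero] at this
      rw [← this, Measure.map_congr (g := X s), Measure.map_apply (hXt s) measurableSet_Icc]
      · rfl
      · filter_upwards [hXB, hB.zero] with ω h h0
        rw [h0, h.1, sub_zero]
    · intro s hs
      have := hT.2.1.gaussIncr 0 s hs
      have hXts : Measurable (fun ω => X (τ ω + s) ω) :=
        hX.comp ((hτ.add_const s).prodMk measurable_id)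
      rw [sub_zero] at this
      rw [← this, Measure.map_congr (g := fun ω => X (τ ω + s) ω),
        Measure.map_apply hXts measurableSet_Icc]
      · rfl
      · filter_upwards [hXB, hBT'] with ω h h0
        rw [h.1, h.2] at h0
        rw [add_zero, h0, h.1, h.2]; ring
  have hsum : ∀ᵐ ω ∂P, ∀ K : ℕ, ∫⁻ s in Set.Ioc 0 (τ ω),
      (Set.Icc (-(K : ℝ)) K).indicator (1 : ℝ → ℝ≥0∞) (X s ω) = 0 := by
    rw [ae_all_iff]
    intro K
    refine (lintegral_eq_zero_iff ?_).1 (key K)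
    have : (fun ω => ∫⁻ s in Set.Ioc 0 (τ ω),
        (Set.Icc (-(K : ℝ)) K).indicator (1 : ℝ → ℝ≥0∞) (X s ω)) =
        fun ω => ∫⁻ s, (Set.indicator {p : Ω × ℝ | 0 < p.2 ∧ p.2 ≤ τ p.1}
          (fun p => (Set.Icc (-(K : ℝ)) K).indicator (1 : ℝ → ℝ≥0∞) (X p.2 p.1))) (ω, s) := by
      ext ω
      rw [← lintegral_indicator measurableSet_Ioc]
      rfl
    rw [this]
    apply Measurable.lintegral_prod_right'
    apply Measurable.indicator
    · exact (measurable_one.indicator measurableSet_Icc).comp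
        (hX.comp (measurable_snd.prodMk measurable_fst))
    · exact (measurableSet_lt measurable_const measurable_snd).inter
        (measurableSet_le measurable_snd (hτ.comp measurable_fst))
  have hz : ∀ᵐ ω ∂P, ¬ (0 < T ω) := by
    filter_upwards [hsum, hXB] with ω h hb hpos
    rw [← hb.2] at hpos
    have hae : ∀ᵐ s ∂(volume.restrict (Set.Ioc 0 (τ ω))), ∀ K : ℕ,
        (Set.Icc (-(K : ℝ)) K).indicator (1 : ℝ → ℝ≥0∞) (X s ω) = 0 := by
      rw [ae_all_iff]
      intro K
      refine (lintegral_eq_zero_iff ?_).1 (h K)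
      exact (measurable_one.indicator measurableSet_Icc).comp (hXc ω).measurable
    have hF : ∀ᵐ s ∂(volume.restrict (Set.Ioc 0 (τ ω))), False := by
      filter_upwards [hae] with s hs
      obtain ⟨K, hK⟩ := exists_nat_ge |X s ω|
      have := hs K
      have hmem : X s ω ∈ Set.Icc (-(K : ℝ)) K := abs_le.1 hK
      rw [Set.indicator_of_mem hmem] at this
      simp at this
    rw [ae_iff] at hF
    simp at hF
    linarith
  rw [ae_iff] at hz
  simp only [not_not] at hz
  exact hTpos.ne' hz
end

section
/- Let ν be a probability measure on ℝ and let T be an unbiased shift of B embedding ν with P₀{T ≥ 0} = 1. Then there exists a minimal unbiased shift T* embedding ν such that P₀{0 ≤ T* ≤ T} = 1. Here an unbiased shift T* with P₀{T* ≥ 0} = 1 is called minimal if every unbiased shift S with P₀{0 ≤ S ≤ T*} = 1 and with B_S having the same distribution as B_{T*} satisfies P₀{S = T*} = 1. -/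
open MeasureTheory ProbabilityTheory

open Filter Topology BoundedContinuousFunction in
/-- Integrals of bounded continuous functions pass to almost sure limits. -/
theorem aux_tendsto_bcf {Ω E : Type*} [MeasurableSpace Ω] {P : Measure Ω} [IsProbabilityMeasure P]
    [TopologicalSpace E] [MeasurableSpace E] [OpensMeasurableSpace E]
    {X : ℕ → Ω → E} {Y : Ω → E} (hX : ∀ n, AEMeasurable (X n) P)
    (hlim : ∀ᵐ ω ∂P, Tendsto (fun n => X n ω) atTop (𝓝 (Y ω))) (f : E →ᵇ ℝ) :
    Tendsto (fun n => ∫ ω, f (X n ω) ∂P) atTop (𝓝 (∫ ω, f (Y ω) ∂P)) := by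
  refine tendsto_integral_of_dominated_convergence (fun _ => ‖f‖) ?_ (integrable_const _) ?_ ?_
  · intro n
    exact (f.continuous.measurable.comp_aemeasurable (hX n)).aestronglyMeasurable
  · intro n
    exact Eventually.of_forall fun ω => f.norm_coe_le_norm _
  · filter_upwards [hlim] with ω hω
    exact (f.continuous.tendsto _).comp hω

open Filter Topology BoundedContinuousFunction in
/-- A constant law is inherited by almost sure limits. -/
theorem aux_map_limit {Ω E : Type*} [MeasurableSpace Ω] {P : Measure Ω} [IsProbabilityMeasure P]
    [TopologicalSpace E] [MeasurableSpace E] [BorelSpace E] [HasOuterApproxClosed E]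
    {X : ℕ → Ω → E} {Y : Ω → E} (hX : ∀ n, AEMeasurable (X n) P) (hY : AEMeasurable Y P)
    (hlim : ∀ᵐ ω ∂P, Tendsto (fun n => X n ω) atTop (𝓝 (Y ω)))
    {μ : Measure E} (hμ : ∀ n, P.map (X n) = μ) : P.map Y = μ := by
  rw [← hμ 0]
  have := Measure.isProbabilityMeasure_map (hX 0)
  have := Measure.isProbabilityMeasure_map hY
  refine ext_of_forall_integral_eq_of_IsFiniteMeasure fun f => ?_
  refine tendsto_nhds_unique (f := fun n => ∫ x, f x ∂(P.map (X n))) (l := atTop) ?_ ?_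
  · have := aux_tendsto_bcf hX hlim f
    rw [integral_map hY f.continuous.measurable.aestronglyMeasurable]
    simpa only [fun n => integral_map (hX n)
      f.continuous.measurable.aestronglyMeasurable] using this
  · simp only [hμ]
    exact tendsto_const_nhds

/-- Gaussian increments, including the degenerate case. -/
theorem aux_gauss {Ω : Type*} [MeasurableSpace Ω] {P : Measure Ω} [IsProbabilityMeasure P]
    {B : ℝ → Ω → ℝ} (hB : IsTwoSidedBM P B) {s t : ℝ} (h : s ≤ t) :
    Measure.map (fun ω => B t ω - B s ω) P = gaussianReal 0 (Real.toNNReal (t - s)) := by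
  rcases h.lt_or_eq with h | rfl
  · exact hB.gaussIncr s t h
  · simp

/-- A random time is a.e. measurable. -/
theorem aux_randomTime {Ω : Type*} [mΩ : MeasurableSpace Ω] {P : Measure Ω}
    {B : ℝ → Ω → ℝ} (hB : ∀ t, AEMeasurable (B t) P) {T : Ω → ℝ} (hT : IsRandomTime B T) :
    AEMeasurable T P := by
  apply NullMeasurable.aemeasurable
  intro s hs
  obtain ⟨u, hu, hu'⟩ := hT hs
  rw [← hu']
  have : @Measurable (NullMeasurableSpace Ω P) (ℝ → ℝ) _ _ (fun ω (t : ℝ) => B t ω) :=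
    measurable_pi_iff.2 fun t => (hB t).nullMeasurable
  exact this hu

open Filter Topology BoundedContinuousFunction in
/-- Unbiased shifts embedding `ν` are closed under almost sure limits. -/
theorem aux_closed {Ω : Type*} [MeasurableSpace Ω] {P : Measure Ω} [IsProbabilityMeasure P]
    {B : ℝ → Ω → ℝ} (hB : IsTwoSidedBM P B) {ν : Measure ℝ} [IsProbabilityMeasure ν]
    {S : ℕ → Ω → ℝ} {R : Ω → ℝ} (hS : ∀ n, IsUnbiasedShift P B (S n))
    (hν : ∀ n, Embeds P B (S n) ν) (hR : IsRandomTime B R)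
    (hlim : ∀ᵐ ω ∂P, Tendsto (fun n => S n ω) atTop (𝓝 (R ω))) :
    IsUnbiasedShift P B R ∧ Embeds P B R ν := by
  have hU : ∀ n, AEMeasurable (fun ω => B (S n ω) ω) P := fun n => by
    refine AEMeasurable.of_map_ne_zero ?_
    rw [hν n]
    exact IsProbabilityMeasure.ne_zero ν
  have hUlim : ∀ᵐ ω ∂P, Tendsto (fun n => B (S n ω) ω) atTop (𝓝 (B (R ω) ω)) := by
    filter_upwards [hlim, hB.cont] with ω h1 h2
    exact (h2.tendsto _).comp h1
  have hUR : AEMeasurable (fun ω => B (R ω) ω) P := aemeasurable_of_tendsto_metrizable_ae' hU hUlim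
  have hX : ∀ n t, AEMeasurable (fun ω => B (S n ω + t) ω - B (S n ω) ω) P :=
    fun n t => (hS n).2.1.aemeas t
  have hXlim : ∀ᵐ ω ∂P, ∀ t, Tendsto (fun n => B (S n ω + t) ω - B (S n ω) ω) atTop
      (𝓝 (B (R ω + t) ω - B (R ω) ω)) := by
    filter_upwards [hlim, hB.cont] with ω h1 h2 t
    exact ((h2.tendsto _).comp (h1.add_const t)).sub ((h2.tendsto _).comp h1)
  have hXR : ∀ t, AEMeasurable (fun ω => B (R ω + t) ω - B (R ω) ω) P := fun t =>
    aemeasurable_of_tendsto_metrizable_ae' (fun n => hX n t) (hXlim.mono fun ω h => h t)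
  have hgauss : ∀ s t : ℝ, s ≤ t → Measure.map (fun ω => (B (R ω + t) ω - B (R ω) ω) -
      (B (R ω + s) ω - B (R ω) ω)) P = gaussianReal 0 (Real.toNNReal (t - s)) := by
    intro s t hst
    refine aux_map_limit (fun n => (hX n t).sub (hX n s)) ((hXR t).sub (hXR s)) ?_
      (fun n => aux_gauss (hS n).2.1 hst)
    filter_upwards [hXlim] with ω h
    exact (h t).sub (h s)
  refine ⟨⟨hR, ⟨hXR, ?_, ?_, ?_, fun s t hst => hgauss s t hst.le⟩, ?_⟩,
    aux_map_limit hU hUR hUlim hν⟩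
  · filter_upwards [hB.cont] with ω h
    exact (h.comp (continuous_const.add continuous_id)).sub continuous_const
  · exact Eventually.of_forall fun ω => by simp
  · intro n t ht
    have hm : ∀ i : Fin n, t i.castSucc ≤ t i.succ := fun i => ht (Fin.castSucc_le_succ i)
    refine (iIndepFun_iff_map_fun_eq_pi_map (fun i => (hXR _).sub (hXR _))).2 ?_
    refine Eq.trans ?_ (congrArg Measure.pi (funext fun i => (hgauss _ _ (hm i)).symm))
    refine aux_map_limit (X := fun k ω (i : Fin n) =>
      (B (S k ω + t i.succ) ω - B (S k ω) ω) - (B (S k ω + t i.castSucc) ω - B (S k ω) ω))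
      (fun k => aemeasurable_pi_lambda _ fun i => (hX k _).sub (hX k _))
      (aemeasurable_pi_lambda _ fun i => (hXR _).sub (hXR _)) ?_ ?_
    · filter_upwards [hXlim] with ω h
      exact tendsto_pi_nhds.2 fun i => (h _).sub (h _)
    · intro k
      refine ((iIndepFun_iff_map_fun_eq_pi_map (fun i => (hX k _).sub (hX k _))).1
        ((hS k).2.1.indepIncr n t ht)).trans ?_
      congr 1
      ext1 i
      exact aux_gauss (hS k).2.1 (hm i)
  · refine process_indepFun_of_bcf hXR hUR fun I f g => ?_
    have hXI : ∀ k, AEMeasurable (fun ω (s : I) => B (S k ω + s) ω - B (S k ω) ω) P :=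
      fun k => aemeasurable_pi_lambda _ fun i => hX k _
    have hXIlim : ∀ᵐ ω ∂P, Tendsto (fun k (s : I) => B (S k ω + s) ω - B (S k ω) ω) atTop
        (𝓝 (fun s : I => B (R ω + s) ω - B (R ω) ω)) := by
      filter_upwards [hXlim] with ω h
      exact tendsto_pi_nhds.2 fun i => h _
    have h1 := aux_tendsto_bcf hXI hXIlim f
    have h2 := aux_tendsto_bcf hU hUlim g
    have h3 := aux_tendsto_bcf (fun k => (hXI k).prodMk (hU k))
      (by filter_upwards [hXIlim, hUlim] with ω a b using a.prodMk_nhds b)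
      (f.compContinuous ⟨Prod.fst, continuous_fst⟩ * g.compContinuous ⟨Prod.snd, continuous_snd⟩)
    refine tendsto_nhds_unique h3 ?_
    refine (h1.mul h2).congr fun k => ?_
    have hind : IndepFun (fun ω (s : I) => B (S k ω + s) ω - B (S k ω) ω)
        (fun ω => B (S k ω) ω) P :=
      (hS k).2.2.comp (φ := fun x (s : I) => x s) (ψ := id)
        (measurable_pi_lambda _ fun s => measurable_pi_apply _) measurable_id
    exact ((hind.comp f.continuous.measurable g.continuous.measurable).integral_fun_mul_eq_mul_integral
      (f.continuous.measurable.comp_aemeasurable (hXI k)).aestronglyMeasurable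
      (g.continuous.measurable.comp_aemeasurable (hU k)).aestronglyMeasurable).symm

/-- any nonnegative unbiased shift embedding `ν` dominates a minimal unbiased
shift embedding `ν`: there is `T*` with `P₀{0 ≤ T* ≤ T} = 1` such that any unbiased shift `S`
with `P₀{0 ≤ S ≤ T*} = 1` and `B_S ∼ B_{T*}` satisfies `P₀{S = T*} = 1`. -/
theorem exists_minimal_unbiased_shift {Ω : Type*} [MeasurableSpace Ω]
    (P : Measure Ω) [IsProbabilityMeasure P]
    (B : ℝ → Ω → ℝ) (hB : IsTwoSidedBM P B)
    (ν : Measure ℝ) [IsProbabilityMeasure ν]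
    (T : Ω → ℝ) (hT : IsUnbiasedShift P B T) (hTν : Embeds P B T ν)
    (hT0 : ∀ᵐ ω ∂P, 0 ≤ T ω) :
    ∃ Tstar : Ω → ℝ, IsUnbiasedShift P B Tstar ∧ Embeds P B Tstar ν ∧
      (∀ᵐ ω ∂P, 0 ≤ Tstar ω ∧ Tstar ω ≤ T ω) ∧
      (∀ S : Ω → ℝ, IsUnbiasedShift P B S →
        (∀ᵐ ω ∂P, 0 ≤ S ω ∧ S ω ≤ Tstar ω) →
        Measure.map (fun ω => B (S ω) ω) P = Measure.map (fun ω => B (Tstar ω) ω) P →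
        ∀ᵐ ω ∂P, S ω = Tstar ω) := by
  classical
  -- the class of admissible shifts and the functional
  let C : (Ω → ℝ) → Prop := fun S => IsUnbiasedShift P B S ∧ Embeds P B S ν ∧ ∀ᵐ ω ∂P, 0 ≤ S ω
  let φ : (Ω → ℝ) → ℝ := fun S => ∫ ω, Real.arctan (S ω) ∂P
  have hint : ∀ S, C S → Integrable (fun ω => Real.arctan (S ω)) P := by
    intro S hS
    refine Integrable.of_bound (C := Real.pi / 2) ?_ ?_
    · exact (Real.continuous_arctan.measurable.comp_aemeasurable
        (aux_randomTime hB.aemeas hS.1.1)).aestronglyMeasurable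
    · refine Filter.Eventually.of_forall fun ω => ?_
      rw [Real.norm_eq_abs, abs_le]
      exact ⟨(Real.neg_pi_div_two_lt_arctan _).le, (Real.arctan_lt_pi_div_two _).le⟩
  have hmono : ∀ S R, C S → C R → (∀ᵐ ω ∂P, S ω ≤ R ω) → φ S ≤ φ R := by
    intro S R hS hR h
    refine integral_mono_ae (hint S hS) (hint R hR) ?_
    filter_upwards [h] with ω hω using Real.arctan_strictMono.monotone hω
  have hnonneg : ∀ S, C S → 0 ≤ φ S := by
    intro S hS
    refine integral_nonneg_of_ae ?_
    filter_upwards [hS.2.2] with ω hω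
    exact Real.arctan_nonneg.2 hω
  -- greedy step
  have step : ∀ (n : ℕ) (S : {S // C S}), ∃ R : {S // C S}, (∀ᵐ ω ∂P, R.1 ω ≤ S.1 ω) ∧
      ∀ Q, C Q → (∀ᵐ ω ∂P, Q ω ≤ S.1 ω) → φ R.1 < φ Q + 1 / ((n : ℝ) + 1) := by
    intro n S
    let A : Set ℝ := φ '' {Q | C Q ∧ ∀ᵐ ω ∂P, Q ω ≤ S.1 ω}
    have hne : A.Nonempty := ⟨_, S.1, ⟨S.2, Filter.Eventually.of_forall fun _ => le_rfl⟩, rfl⟩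
    have hbdd : BddBelow A := ⟨0, by rintro _ ⟨Q, hQ, rfl⟩; exact hnonneg Q hQ.1⟩
    have hpos : (0 : ℝ) < 1 / ((n : ℝ) + 1) := by positivity
    obtain ⟨_, ⟨R, hR, rfl⟩, hlt⟩ := exists_lt_of_csInf_lt hne (lt_add_of_pos_right (sInf A) hpos)
    refine ⟨⟨R, hR.1⟩, hR.2, fun Q hQ hQS => hlt.trans_le ?_⟩
    have : sInf A ≤ φ Q := csInf_le hbdd ⟨Q, ⟨hQ, hQS⟩, rfl⟩
    linarith
  choose next hnext1 hnext2 using step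
  let S : ℕ → {S // C S} := fun n => Nat.rec ⟨T, hT, hTν, hT0⟩ (fun n S => next n S) n
  have hSsucc : ∀ n, S (n + 1) = next n (S n) := fun n => rfl
  have hanti : ∀ᵐ ω ∂P, Antitone fun n => (S n).1 ω := by
    have : ∀ᵐ ω ∂P, ∀ n, (S (n + 1)).1 ω ≤ (S n).1 ω :=
      ae_all_iff.2 fun n => by rw [hSsucc]; exact hnext1 n (S n)
    filter_upwards [this] with ω h using antitone_nat_of_succ_le h
  have hpos : ∀ᵐ ω ∂P, ∀ n, 0 ≤ (S n).1 ω := ae_all_iff.2 fun n => (S n).2.2.2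
  let R : Ω → ℝ := fun ω => ⨅ n, (S n).1 ω
  have hRle : ∀ᵐ ω ∂P, ∀ n, R ω ≤ (S n).1 ω := by
    filter_upwards [hpos] with ω h n
    exact ciInf_le ⟨0, by rintro _ ⟨m, rfl⟩; exact h m⟩ n
  have hR0 : ∀ᵐ ω ∂P, 0 ≤ R ω := by
    filter_upwards [hpos] with ω h using le_ciInf h
  have hRlim : ∀ᵐ ω ∂P, Filter.Tendsto (fun n => (S n).1 ω) Filter.atTop (nhds (R ω)) := by
    filter_upwards [hpos, hanti] with ω h1 h2
    exact tendsto_atTop_ciInf h2 ⟨0, by rintro _ ⟨m, rfl⟩; exact h1 m⟩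
  have hRrt : IsRandomTime B R :=
    @Measurable.iInf _ _ _ _ _ (MeasurableSpace.comap (fun ω (t : ℝ) => B t ω) inferInstance)
      _ _ _ _ _ _ (fun n => (S n).2.1.1)
  obtain ⟨hRu, hRν⟩ := aux_closed hB (fun n => (S n).2.1) (fun n => (S n).2.2.1) hRrt hRlim
  have hRC : C R := ⟨hRu, hRν, hR0⟩
  refine ⟨R, hRu, hRν, ?_, ?_⟩
  · filter_upwards [hR0, hRle] with ω h1 h2 using ⟨h1, h2 0⟩
  · intro Q hQ hQR hQmap
    have hQC : C Q := ⟨hQ, hQmap.trans hRν, hQR.mono fun ω h => h.1⟩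
    have hQle : ∀ᵐ ω ∂P, Q ω ≤ R ω := hQR.mono fun ω h => h.2
    have key : ∀ n : ℕ, φ R ≤ φ Q + 1 / ((n : ℝ) + 1) := by
      intro n
      have h1 : φ R ≤ φ (S (n + 1)).1 :=
        hmono _ _ hRC (S (n + 1)).2 (hRle.mono fun ω h => h (n + 1))
      have h2 := hnext2 n (S n) Q hQC
        (by filter_upwards [hQle, hRle] with ω a b using a.trans (b n))
      rw [← hSsucc] at h2
      linarith
    have hle : φ R ≤ φ Q := by
      have h0 : Filter.Tendsto (fun n : ℕ => φ Q + 1 / ((n : ℝ) + 1)) Filter.atTop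
          (nhds (φ Q + 0)) := tendsto_one_div_add_atTop_nhds_zero_nat.const_add _
      rw [add_zero] at h0
      exact ge_of_tendsto' h0 key
    have heq : φ Q = φ R := le_antisymm (hmono _ _ hQC hRC hQle) hle
    have := (integral_eq_iff_of_ae_le (hint Q hQC) (hint R hRC)
      (by filter_upwards [hQle] with ω h using Real.arctan_strictMono.monotone h)).1 heq
    filter_upwards [this] with ω h using Real.arctan_injective h
end
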